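/- arXiv:2106.06194 — 6 statements merged into one kernel-verified Lean document; each statement's English description precedes it below -/
import Mathlib

section
/- Let τ > 0, m > 0 with m·τ < 1, let δ ≥ 0 and r > 0, and consider the quartic polynomial P(λ) = τ²λ⁴ + 2τλ³ + (1 + τ(δ+τ)r²)λ² + (δ+2τ)r²λ + (1−mτ)r² with real coefficients, viewed over ℂ. Then P has no root on the imaginary axis: for every y ∈ ℝ, P(i·y) ≠ 0. -/
/-!
At `λ = iy` the imaginary part of the quartic is `y * ((δ + 2τ) r² - 2τ y²)`. If `y = 0`, the real
part is `(1 - mτ) r² > 0`. Otherwise `τ y² = τ r² + δ r² / 2`, so that `y² ≥ r²`, and the real part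
equals `-τ δ r² y² / 2 - (y² - r²) - m τ r²`, which is negative because of the memory term.
-/

/-- The characteristic quartic
`P(λ) = τ²λ⁴ + 2τλ³ + (1 + τ(δ+τ)r²)λ² + (δ+2τ)r²λ + (1−mτ)r²`
of the Fourier-transformed MGT equation with exponential memory kernel has no
purely imaginary root, under the structural assumption `mτ < 1`. -/
theorem mgt_quartic_no_imaginary_root (τ m δ r : ℝ) (hτ : 0 < τ) (hm : 0 < m)
    (hmτ : m * τ < 1) (hδ : 0 ≤ δ) (hr : 0 < r) :
    ∀ y : ℝ,
      (τ : ℂ)^2 * (Complex.I * (y : ℂ))^4 + 2 * (τ : ℂ) * (Complex.I * (y : ℂ))^3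
        + (1 + (τ : ℂ) * ((δ : ℂ) + (τ : ℂ)) * (r : ℂ)^2) * (Complex.I * (y : ℂ))^2
        + ((δ : ℂ) + 2 * (τ : ℂ)) * (r : ℂ)^2 * (Complex.I * (y : ℂ))
        + (1 - (m : ℂ) * (τ : ℂ)) * (r : ℂ)^2 ≠ 0 := by
  intro y h
  have hre := congrArg Complex.re h
  have him := congrArg Complex.im h
  have hP : (τ : ℂ)^2 * (Complex.I * (y : ℂ))^4 + 2 * (τ : ℂ) * (Complex.I * (y : ℂ))^3
        + (1 + (τ : ℂ) * ((δ : ℂ) + (τ : ℂ)) * (r : ℂ)^2) * (Complex.I * (y : ℂ))^2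
        + ((δ : ℂ) + 2 * (τ : ℂ)) * (r : ℂ)^2 * (Complex.I * (y : ℂ))
        + (1 - (m : ℂ) * (τ : ℂ)) * (r : ℂ)^2
      = ((τ^2 * y^4 - (1 + τ * (δ + τ) * r^2) * y^2 + (1 - m * τ) * r^2 : ℝ) : ℂ)
        + ((y * ((δ + 2 * τ) * r^2 - 2 * τ * y^2) : ℝ) : ℂ) * Complex.I := by
    have h3 : Complex.I ^ 3 = -Complex.I := Complex.I_pow_three
    have h4 : Complex.I ^ 4 = 1 := Complex.I_pow_four
    simp only [mul_pow, h3, h4, Complex.I_sq]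
    push_cast
    ring
  simp only [hP, Complex.add_re, Complex.re_ofReal_mul, Complex.ofReal_re, Complex.I_re,
    mul_zero, add_zero, Complex.zero_re] at hre
  simp only [hP, Complex.add_im, Complex.im_ofReal_mul, Complex.ofReal_im, Complex.I_im,
    mul_one, zero_add, Complex.zero_im] at him
  have hr2 : 0 < r^2 := by positivity
  rcases mul_eq_zero.mp him with hy | hy
  · subst hy
    have : 0 < (1 - m * τ) * r^2 := mul_pos (by linarith) hr2
    linarith
  · have hs : τ * y^2 = τ * r^2 + δ * r^2 / 2 := by linarith
    -- Substituting `hs` into one factor of `y²` leaves a sum of nonpositive terms.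
    have hfac : τ^2 * y^4 - (1 + τ * (δ + τ) * r^2) * y^2 + (1 - m * τ) * r^2
        = -(τ * δ * r^2 * y^2 / 2) - (y^2 - r^2) - m * τ * r^2 := by
      linear_combination τ * y^2 * hs
    have hge : r^2 ≤ y^2 := by
      have : 0 ≤ δ * r^2 := by positivity
      exact le_of_mul_le_mul_left (by linarith) hτ
    have h1 : 0 ≤ τ * δ * r^2 * y^2 / 2 := by positivity
    have h2 : 0 < m * τ * r^2 := by positivity
    linarith
end

section
/- Let τ > 0, m > 0 with m·τ < 1, let δ ≥ 0 and r > 0, and consider the quartic polynomial P(λ) = τ²λ⁴ + 2τλ³ + (1 + τ(δ+τ)r²)λ² + (δ+2τ)r²λ + (1−mτ)r² over ℂ. Then every complex root λ of P satisfies Re λ < 0. -/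
/-!
A Routh–Hurwitz argument. If `λ = x + iy` is a root with `x ≥ 0`, then `iy` is a root of the real
quartic `P(x + s) = b₄s⁴ + b₃s³ + b₂s² + b₁s + b₀`, so that

* `b₄y⁴ - b₂y² + b₀ = 0` (real part), and
* `y (b₁ - b₃y²) = 0` (imaginary part).

All `bᵢ` are positive, which rules out `y = 0`; otherwise `b₃y² = b₁`, and eliminating `y²` makes
the Hurwitz determinant `b₁b₂b₃ - b₄b₁² - b₀b₃²` vanish. This determinant is positive
(`mgt_shifted_hurwitz_pos`): replacing `mτ` by `0` changes it by `mτr²b₃² > 0`, and what remains is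
a polynomial in `τ, δ, r², x` all of whose coefficients are nonnegative.
-/

/-- An imaginary root `iy` of a real quartic with `b₀ > 0` and `b₃ ≠ 0` forces the Hurwitz
determinant to vanish. The hypotheses are the real and imaginary parts of the root equation. -/
lemma hurwitz_eq_zero_of_imaginary_root {b₄ b₃ b₂ b₁ b₀ y : ℝ} (h₀ : 0 < b₀)
    (hre : b₄ * y ^ 4 - b₂ * y ^ 2 + b₀ = 0) (him : y * (b₁ - b₃ * y ^ 2) = 0) :
    b₁ * b₂ * b₃ - b₄ * b₁ ^ 2 - b₀ * b₃ ^ 2 = 0 := by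
  rcases mul_eq_zero.mp him with hy | hy
  · subst hy
    norm_num at hre
    exact absurd hre h₀.ne'
  · obtain rfl : b₁ = b₃ * y ^ 2 := by linarith
    linear_combination -b₃ ^ 2 * hre

/-- Hurwitz determinant of `s ↦ P(x + s)`, with `R = r²` and `B = mτ`. -/
lemma mgt_shifted_hurwitz_pos {τ δ R B x : ℝ} (hτ : 0 < τ) (hδ : 0 ≤ δ) (hR : 0 < R)
    (hB : 0 < B) (hx : 0 ≤ x) :
    0 < (4 * τ ^ 2 * x ^ 3 + 6 * τ * x ^ 2 + 2 * (1 + τ * (δ + τ) * R) * x + (δ + 2 * τ) * R)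
          * (6 * τ ^ 2 * x ^ 2 + 6 * τ * x + (1 + τ * (δ + τ) * R)) * (4 * τ ^ 2 * x + 2 * τ)
        - τ ^ 2 * (4 * τ ^ 2 * x ^ 3 + 6 * τ * x ^ 2 + 2 * (1 + τ * (δ + τ) * R) * x
          + (δ + 2 * τ) * R) ^ 2
        - (τ ^ 2 * x ^ 4 + 2 * τ * x ^ 3 + (1 + τ * (δ + τ) * R) * x ^ 2 + (δ + 2 * τ) * R * x
          + (1 - B) * R) * (4 * τ ^ 2 * x + 2 * τ) ^ 2 := by
  have hpos : 0 < B * R * (4 * τ ^ 2 * x + 2 * τ) ^ 2 := by positivity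
  have hnonneg : 0 ≤
      (4 * τ ^ 2 * x ^ 3 + 6 * τ * x ^ 2 + 2 * (1 + τ * (δ + τ) * R) * x + (δ + 2 * τ) * R)
          * (6 * τ ^ 2 * x ^ 2 + 6 * τ * x + (1 + τ * (δ + τ) * R)) * (4 * τ ^ 2 * x + 2 * τ)
        - τ ^ 2 * (4 * τ ^ 2 * x ^ 3 + 6 * τ * x ^ 2 + 2 * (1 + τ * (δ + τ) * R) * x
          + (δ + 2 * τ) * R) ^ 2
        - (τ ^ 2 * x ^ 4 + 2 * τ * x ^ 3 + (1 + τ * (δ + τ) * R) * x ^ 2 + (δ + 2 * τ) * R * x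
          + R) * (4 * τ ^ 2 * x + 2 * τ) ^ 2 := by
    -- After expansion every monomial has a positive coefficient.
    ring_nf
    positivity
  linarith

/-- Every complex root of the characteristic quartic
`P(λ) = τ²λ⁴ + 2τλ³ + (1 + τ(δ+τ)r²)λ² + (δ+2τ)r²λ + (1−mτ)r²`
of the Fourier-transformed MGT equation with exponential memory kernel
has strictly negative real part, under the assumption `mτ < 1`. -/
theorem mgt_quartic_roots_negative_real_part (τ m δ r : ℝ) (hτ : 0 < τ) (hm : 0 < m)
    (hmτ : m * τ < 1) (hδ : 0 ≤ δ) (hr : 0 < r) :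
    ∀ lam : ℂ,
      (τ : ℂ)^2 * lam^4 + 2 * (τ : ℂ) * lam^3
        + (1 + (τ : ℂ) * ((δ : ℂ) + (τ : ℂ)) * (r : ℂ)^2) * lam^2
        + ((δ : ℂ) + 2 * (τ : ℂ)) * (r : ℂ)^2 * lam
        + (1 - (m : ℂ) * (τ : ℂ)) * (r : ℂ)^2 = 0 →
      lam.re < 0 := by
  intro lam h
  by_contra! hx
  have hre := congrArg Complex.re h
  have him := congrArg Complex.im h
  simp [pow_succ] at hre him
  set x := lam.re
  set y := lam.im
  have hB : 0 < 1 - m * τ := by linarith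
  have hdet := mgt_shifted_hurwitz_pos hτ hδ (pow_pos hr 2) (mul_pos hm hτ) hx
  refine hdet.ne' (hurwitz_eq_zero_of_imaginary_root (y := y) (by positivity) ?_ ?_)
  · linear_combination hre
  · linear_combination him
end

section
/- Let n ≥ 1 be an integer, s ≥ 0 a real number with n ≥ 3 − 2s, let c > 0 and 0 < ε < 1. Then there exists C > 0 such that for all t > 0, ∫₀^ε r^(2s+n−3) · sin(rt)² · exp(−c·r²·t) dr ≤ C·(1+t)^(1−s−n/2). -/
/-!
Write `p = 2s + n - 3`, so that `p ≥ 0` and `1 - s - n/2 = -(p+1)/2`. The bound uses only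
`sin² ≤ 1`. For `0 < r < 1` one has `exp(-c r² t) ≤ exp c · exp(-c(1+t) r²)`, which replaces `t` by
`1 + t` at the cost of a constant and so covers small and large `t` at once. Enlarging the domain to
`(0, ∞)` leaves a Gaussian moment, which `integral_rpow_mul_exp_neg_mul_rpow` evaluates as
`(c(1+t))^(-(p+1)/2) · (1/2) · Γ((p+1)/2)`.
-/

/-- Small-frequency integral estimate, non-singular regime `n ≥ 3 − 2s`:
`∫₀^ε r^(2s+n−3)·sin(rt)²·exp(−c r² t) dr ≤ C·(1+t)^(1−s−n/2)` for all `t > 0`. -/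
theorem small_freq_integral_nonsingular (n : ℕ) (s c ε : ℝ) (hn : 1 ≤ n) (hs : 0 ≤ s)
    (hns : 3 - 2 * s ≤ (n : ℝ)) (hc : 0 < c) (hε0 : 0 < ε) (hε1 : ε < 1) :
    ∃ C : ℝ, 0 < C ∧ ∀ t : ℝ, 0 < t →
      (∫ r in (0:ℝ)..ε, r ^ (2 * s + (n : ℝ) - 3) * Real.sin (r * t)^2
          * Real.exp (-(c * r^2 * t)))
        ≤ C * (1 + t) ^ (1 - s - (n : ℝ) / 2) := by
  obtain ⟨p, hp⟩ : ∃ p : ℝ, p = 2 * s + (n : ℝ) - 3 := ⟨_, rfl⟩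
  have hp0 : 0 ≤ p := by linarith
  have he : 1 - s - (n : ℝ) / 2 = -(p + 1) / 2 := by rw [hp]; ring
  rw [← hp, he]
  have hG : 0 < Real.Gamma ((p + 1) / 2) := Real.Gamma_pos_of_pos (by linarith)
  refine ⟨Real.exp c * (c ^ (-(p + 1) / 2) * (1 / 2) * Real.Gamma ((p + 1) / 2)),
    by positivity, fun t ht => ?_⟩
  have hb : 0 < c * (1 + t) := by positivity
  have hint : MeasureTheory.IntegrableOn
      (fun r : ℝ => Real.exp c * (r ^ p * Real.exp (-(c * (1 + t)) * r ^ 2))) (Set.Ioi 0) :=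
    (integrableOn_rpow_mul_exp_neg_mul_sq hb (by linarith)).const_mul _
  have hval : ∫ r in Set.Ioi (0:ℝ), r ^ p * Real.exp (-(c * (1 + t)) * r ^ 2)
      = (c * (1 + t)) ^ (-(p + 1) / 2) * (1 / 2) * Real.Gamma ((p + 1) / 2) := by
    have h := integral_rpow_mul_exp_neg_mul_rpow (p := 2) (q := p) (by norm_num)
      (by linarith) hb
    simpa only [Real.rpow_two] using h
  rw [intervalIntegral.integral_of_le hε0.le]
  calc ∫ r in Set.Ioc 0 ε, r ^ p * Real.sin (r * t)^2 * Real.exp (-(c * r^2 * t))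
      ≤ ∫ r in Set.Ioc 0 ε, Real.exp c * (r ^ p * Real.exp (-(c * (1 + t)) * r ^ 2)) := by
        apply MeasureTheory.integral_mono_of_nonneg
        · filter_upwards [MeasureTheory.ae_restrict_mem measurableSet_Ioc] with r hr
          have := Real.rpow_nonneg hr.1.le p
          simp only [Pi.zero_apply]
          positivity
        · exact hint.mono_set Set.Ioc_subset_Ioi_self
        · filter_upwards [MeasureTheory.ae_restrict_mem measurableSet_Ioc] with r hr
          have h1 := Real.rpow_nonneg hr.1.le p
          have h2 : Real.exp (-(c * r^2 * t))
              ≤ Real.exp c * Real.exp (-(c * (1 + t)) * r ^ 2) := by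
            rw [← Real.exp_add]
            apply Real.exp_le_exp.2
            have : r ^ 2 ≤ 1 := pow_le_one₀ hr.1.le (hr.2.trans hε1.le)
            nlinarith
          calc r ^ p * Real.sin (r * t)^2 * Real.exp (-(c * r^2 * t))
              ≤ r ^ p * 1 * (Real.exp c * Real.exp (-(c * (1 + t)) * r ^ 2)) := by
                gcongr
                exact Real.sin_sq_le_one _
            _ = _ := by ring
    _ ≤ ∫ r in Set.Ioi 0, Real.exp c * (r ^ p * Real.exp (-(c * (1 + t)) * r ^ 2)) := by
        apply MeasureTheory.setIntegral_mono_set hint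
        · filter_upwards [MeasureTheory.ae_restrict_mem measurableSet_Ioi] with r hr
          have := Real.rpow_nonneg (le_of_lt hr) p
          simp only [Pi.zero_apply]
          positivity
        · exact Set.Ioc_subset_Ioi_self.eventuallyLE
    _ = _ := by
        rw [MeasureTheory.integral_const_mul, hval, Real.mul_rpow hc.le (by positivity)]
        ring
end

section
/- Let n ≥ 1 be an integer, s ≥ 0 a real number with n < 2 − 2s, let c > 0 and 0 < ε < 1. Then there exists C > 0 such that for all t > 0, ∫₀^ε r^(2s+n−3) · sin(rt)² · exp(−c·r²·t) dr ≤ C·(1+t)^(2−2s−n). -/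
/-!
Put `p = 2s + n - 3`. The hypotheses give `-2 ≤ p < -1`. Since `sin² (rt) ≤ min 1 (rt)²` and the
Gaussian factor is at most `1`, the integrand is at most `t² r^(p+2)` and at most `r^p`.
The integrand is nonnegative, so the integral only grows when extended to `(0, ∞)`; using the
first bound on `(0, 1/t]` and the second on `(1/t, ∞)` gives
`(1/(p+3) + 1/(-p-1)) · t^(-p-1)`, and `t^(-p-1) ≤ (1+t)^(-p-1)` because `-p-1 > 0`.
-/

open MeasureTheory Set in
/-- The scale-invariant bound over the whole half-line, together with the integrability that makes
restricting to a bounded interval meaningful. -/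
lemma halfLine_bound (p c t : ℝ) (hp2 : -3 < p) (hp1 : p < -1) (hc : 0 < c) (ht : 0 < t) :
    IntegrableOn (fun r : ℝ => r ^ p * Real.sin (r * t) ^ 2 * Real.exp (-(c * r ^ 2 * t))) (Ioi 0) ∧
    ∫ r in Ioi (0:ℝ), r ^ p * Real.sin (r * t) ^ 2 * Real.exp (-(c * r ^ 2 * t))
      ≤ (1 / (p + 3) + 1 / (-p - 1)) * t ^ (-p - 1) := by
  set F : ℝ → ℝ := fun r => r ^ p * Real.sin (r * t) ^ 2 * Real.exp (-(c * r ^ 2 * t)) with hF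
  have hmeas : Measurable F := by fun_prop
  have hF0 : ∀ r, 0 < r → 0 ≤ F r := fun r hr => by simp only [hF]; positivity
  have hbig : ∀ r, 0 < r → F r ≤ r ^ p := by
    intro r hr
    have hrp : 0 ≤ r ^ p := by positivity
    have h1 : Real.exp (-(c * r ^ 2 * t)) ≤ 1 := Real.exp_le_one_iff.2 (by
      have : 0 ≤ c * r ^ 2 * t := by positivity
      linarith)
    calc F r ≤ r ^ p * 1 * 1 := by
          simp only [hF]
          gcongr
          exact Real.sin_sq_le_one _
      _ = r ^ p := by ring
  have hsmall : ∀ r, 0 < r → F r ≤ t ^ 2 * r ^ (p + 2) := by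
    intro r hr
    have h1 : Real.exp (-(c * r ^ 2 * t)) ≤ 1 := Real.exp_le_one_iff.2 (by
      have : 0 ≤ c * r ^ 2 * t := by positivity
      linarith)
    have h2 : Real.sin (r * t) ^ 2 ≤ (r * t) ^ 2 := sq_le_sq.2 Real.abs_sin_le_abs
    calc F r ≤ r ^ p * (r * t) ^ 2 * 1 := by simp only [hF]; gcongr
      _ = t ^ 2 * r ^ (p + 2) := by
          rw [Real.rpow_add hr, Real.rpow_two]; ring
  have ha : 0 < t⁻¹ := inv_pos.2 ht
  have hg1 : IntegrableOn (fun r : ℝ => t ^ 2 * r ^ (p + 2)) (Ioc 0 t⁻¹) :=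
    (intervalIntegrable_iff_integrableOn_Ioc_of_le ha.le).1
      ((intervalIntegral.intervalIntegrable_rpow' (by linarith)).const_mul _)
  have hg2 : IntegrableOn (fun r : ℝ => r ^ p) (Ioi t⁻¹) := integrableOn_Ioi_rpow_of_lt hp1 ha
  have hF1 : IntegrableOn F (Ioc 0 t⁻¹) := by
    refine hg1.mono' hmeas.aestronglyMeasurable ?_
    filter_upwards [ae_restrict_mem measurableSet_Ioc] with r hr
    rw [Real.norm_of_nonneg (hF0 r hr.1)]
    exact hsmall r hr.1
  have hF2 : IntegrableOn F (Ioi t⁻¹) := by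
    refine hg2.mono' hmeas.aestronglyMeasurable ?_
    filter_upwards [ae_restrict_mem measurableSet_Ioi] with r hr
    have hr0 : 0 < r := ha.trans hr
    rw [Real.norm_of_nonneg (hF0 r hr0)]
    exact hbig r hr0
  have hunion : Ioc 0 t⁻¹ ∪ Ioi t⁻¹ = Ioi (0:ℝ) := Ioc_union_Ioi_eq_Ioi ha.le
  refine ⟨hunion ▸ hF1.union hF2, ?_⟩
  rw [← hunion, setIntegral_union (Ioc_disjoint_Ioi le_rfl) measurableSet_Ioi hF1 hF2]
  have i1 : ∫ r in Ioc 0 t⁻¹, F r ≤ 1 / (p + 3) * t ^ (-p - 1) := by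
    refine (setIntegral_mono_on hF1 hg1 measurableSet_Ioc fun r hr => hsmall r hr.1).trans_eq ?_
    rw [← intervalIntegral.integral_of_le ha.le, intervalIntegral.integral_const_mul,
      integral_rpow (Or.inl (by linarith)), Real.zero_rpow (by linarith), Real.inv_rpow ht.le,
      ← Real.rpow_neg ht.le, ← Real.rpow_two,
      show -p - 1 = 2 + -(p + 2 + 1) by ring, Real.rpow_add ht, show p + 2 + 1 = p + 3 by ring]
    ring
  have i2 : ∫ r in Ioi t⁻¹, F r ≤ 1 / (-p - 1) * t ^ (-p - 1) := by
    refine (setIntegral_mono_on hF2 hg2 measurableSet_Ioi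
      fun r hr => hbig r (ha.trans hr)).trans_eq ?_
    rw [integral_Ioi_rpow_of_lt hp1 ha, Real.inv_rpow ht.le, ← Real.rpow_neg ht.le,
      show -p - 1 = -(p + 1) by ring, one_div_neg_eq_neg_one_div]
    ring
  linarith

/-- Small-frequency integral estimate, strongly singular regime `n < 2 − 2s`:
`∫₀^ε r^(2s+n−3)·sin(rt)²·exp(−c r² t) dr ≤ C·(1+t)^(2−2s−n)` for all `t > 0`. -/
theorem small_freq_integral_singular (n : ℕ) (s c ε : ℝ) (hn : 1 ≤ n) (hs : 0 ≤ s)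
    (hns : (n : ℝ) < 2 - 2 * s) (hc : 0 < c) (hε0 : 0 < ε) (hε1 : ε < 1) :
    ∃ C : ℝ, 0 < C ∧ ∀ t : ℝ, 0 < t →
      (∫ r in (0:ℝ)..ε, r ^ (2 * s + (n : ℝ) - 3) * Real.sin (r * t)^2
          * Real.exp (-(c * r^2 * t)))
        ≤ C * (1 + t) ^ (2 - 2 * s - (n : ℝ)) := by
  have hn' : (1 : ℝ) ≤ n := by exact_mod_cast hn
  set p : ℝ := 2 * s + (n : ℝ) - 3 with hp
  have h3 : 0 < p + 3 := by linarith
  have h1 : 0 < -p - 1 := by linarith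
  have hC : 0 < 1 / (p + 3) + 1 / (-p - 1) := by positivity
  refine ⟨_, hC, fun t ht => ?_⟩
  obtain ⟨hint, hle⟩ := halfLine_bound p c t (by linarith) (by linarith) hc ht
  rw [intervalIntegral.integral_of_le hε0.le, show 2 - 2 * s - (n : ℝ) = -p - 1 by rw [hp]; ring]
  refine le_trans (MeasureTheory.setIntegral_mono_set hint ?_
    Set.Ioc_subset_Ioi_self.eventuallyLE) (hle.trans ?_)
  · filter_upwards [MeasureTheory.ae_restrict_mem measurableSet_Ioi] with r hr
    have hr0 : (0:ℝ) < r := hr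
    simp only [Pi.zero_apply]
    positivity
  · gcongr
    linarith
end

section
/- Let n ≥ 1 be an integer, s ≥ 0 a real number with n = 2 − 2s, let c > 0 and 0 < ε < 1. Then there exists C > 0 such that for all t > 0, ∫₀^ε r^(2s+n−3) · sin(rt)² · exp(−c·r²·t) dr ≤ C·(1+t)^(1−s−n/2)·log(e + t). -/
/-!
The relation `n = 2 - 2s` makes the weight equal to `r⁻¹` and the power of `1 + t` equal to `1`, so
the claim is that the integral grows at most logarithmically. From `sin² x ≤ x²` and `sin² x ≤ 1`
one gets the single bound `sin² x ≤ 2x² / (1 + x²)` (`sin_sq_le_rational`), which captures both the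
regime `r ≤ 1/t` and the regime `r ≥ 1/t`. Dropping the Gaussian factor, the integrand is thus at
most `2rt² / (1 + r²t²)`, the derivative in `r` of `log (1 + r²t²)`, and
`log (1 + ε²t²) ≤ 2 log (1 + t)`.
-/

theorem sin_sq_le_rational (x : ℝ) : Real.sin x ^ 2 ≤ 2 * x ^ 2 / (1 + x ^ 2) := by
  have h1 : Real.sin x ^ 2 ≤ x ^ 2 := sq_le_sq.mpr Real.abs_sin_le_abs
  have h2 : Real.sin x ^ 2 ≤ 1 := Real.sin_sq_le_one x
  rw [le_div_iff₀ (by positivity)]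
  nlinarith [sq_nonneg x]

theorem integral_majorant (t ε : ℝ) :
    ∫ r in (0:ℝ)..ε, 2 * r * t ^ 2 / (1 + (r * t) ^ 2) = Real.log (1 + (ε * t) ^ 2) := by
  have hpos : ∀ r : ℝ, 1 + (r * t) ^ 2 ≠ 0 := fun r => by positivity
  rw [intervalIntegral.integral_eq_sub_of_hasDerivAt
    (f := fun r => Real.log (1 + (r * t) ^ 2))]
  · simp
  · intro r _
    have h := ((((hasDerivAt_id r).mul_const t).pow 2).const_add 1).log (hpos r)
    refine h.congr_deriv ?_
    simp
    ring
  · exact (Continuous.div (by fun_prop) (by fun_prop) hpos).intervalIntegrable _ _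

/-- Small-frequency integral estimate, borderline logarithmic regime `n = 2 − 2s`:
`∫₀^ε r^(2s+n−3)·sin(rt)²·exp(−c r² t) dr ≤ C·(1+t)^(1−s−n/2)·log(e+t)` for all `t > 0`. -/
theorem small_freq_integral_log (n : ℕ) (s c ε : ℝ) (hn : 1 ≤ n) (hs : 0 ≤ s)
    (hns : (n : ℝ) = 2 - 2 * s) (hc : 0 < c) (hε0 : 0 < ε) (hε1 : ε < 1) :
    ∃ C : ℝ, 0 < C ∧ ∀ t : ℝ, 0 < t →
      (∫ r in (0:ℝ)..ε, r ^ (2 * s + (n : ℝ) - 3) * Real.sin (r * t)^2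
          * Real.exp (-(c * r^2 * t)))
        ≤ C * (1 + t) ^ (1 - s - (n : ℝ) / 2) * Real.log (Real.exp 1 + t) := by
  refine ⟨2, two_pos, fun t ht => ?_⟩
  have e1 : 2 * s + (n : ℝ) - 3 = -1 := by rw [hns]; ring
  have e2 : 1 - s - (n : ℝ) / 2 = 0 := by rw [hns]; ring
  rw [e1, e2, Real.rpow_zero, mul_one]
  have hint : IntervalIntegrable (fun r : ℝ => 2 * r * t ^ 2 / (1 + (r * t) ^ 2))
      MeasureTheory.volume 0 ε :=
    (Continuous.div (by fun_prop) (by fun_prop)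
      (fun r => by positivity)).intervalIntegrable _ _
  have hpt : ∀ r ∈ Set.Ioc 0 ε,
      ‖r ^ (-1 : ℝ) * Real.sin (r * t) ^ 2 * Real.exp (-(c * r ^ 2 * t))‖
        ≤ 2 * r * t ^ 2 / (1 + (r * t) ^ 2) := by
    intro r hr
    have hr0 : 0 < r := hr.1
    rw [Real.norm_of_nonneg (by positivity), Real.rpow_neg_one]
    calc r⁻¹ * Real.sin (r * t) ^ 2 * Real.exp (-(c * r ^ 2 * t))
        ≤ r⁻¹ * Real.sin (r * t) ^ 2 * 1 := by
          gcongr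
          exact Real.exp_le_one_iff.mpr (neg_nonpos.mpr (by positivity))
      _ ≤ r⁻¹ * (2 * (r * t) ^ 2 / (1 + (r * t) ^ 2)) := by
          rw [mul_one]
          gcongr
          exact sin_sq_le_rational _
      _ = 2 * r * t ^ 2 / (1 + (r * t) ^ 2) := by field_simp
  -- The norm bound needs integrability of the majorant only.
  have hle := intervalIntegral.norm_integral_le_of_norm_le hε0.le
    (Filter.Eventually.of_forall hpt) hint
  rw [integral_majorant] at hle
  refine (Real.le_norm_self _).trans (hle.trans ?_)
  have he : 1 ≤ Real.exp 1 := Real.one_le_exp zero_le_one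
  have hεt : ε * t ≤ t := by nlinarith
  have hεt0 : 0 < ε * t := by positivity
  calc Real.log (1 + (ε * t) ^ 2) ≤ Real.log ((Real.exp 1 + t) ^ 2) := by
        apply Real.log_le_log (by positivity)
        nlinarith
    _ = 2 * Real.log (Real.exp 1 + t) := by simp [Real.log_pow]
end

section
/- Let n ≥ 1 be an integer, s ≥ 0 a real number with 2 − 2s < n < 3 − 2s, let c > 0 and 0 < ε < 1. Then there exists C > 0 such that for all t > 0, ∫₀^ε r^(2s+n−3) · sin(rt)² · exp(−c·r²·t) dr ≤ C·(1+t)^(2−5s/3−5n/6). -/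
/-!
Write `a = 2s + n - 3`, so `-1 < a < 0`. Bounding `sin² ≤ 1` and, since `r < ε < 1`,
`exp (-c r² t) ≤ exp c · exp (-c (1 + t) r²)`, the integral is at most `exp c` times the Gaussian
moment `∫₀^∞ r^a exp (-c (1 + t) r²) dr`, which is a constant multiple of `(1 + t) ^ (-(a + 1) / 2)`
(`integral_rpow_mul_exp_neg_mul_rpow`; it converges because `a > -1`). The claimed exponent is
`-1/2 - 5a/6`, which is at least `-1/2 - a/2` because `a < 0`, and `1 + t ≥ 1`.
-/

/-- Small-frequency integral estimate, regime `2 − 2s < n < 3 − 2s`: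
`∫₀^ε r^(2s+n−3)·sin(rt)²·exp(−c r² t) dr ≤ C·(1+t)^(2−5s/3−5n/6)` for all `t > 0`. -/
theorem small_freq_integral_intermediate (n : ℕ) (s c ε : ℝ) (hn : 1 ≤ n) (hs : 0 ≤ s)
    (hns1 : 2 - 2 * s < (n : ℝ)) (hns2 : (n : ℝ) < 3 - 2 * s)
    (hc : 0 < c) (hε0 : 0 < ε) (hε1 : ε < 1) :
    ∃ C : ℝ, 0 < C ∧ ∀ t : ℝ, 0 < t →
      (∫ r in (0:ℝ)..ε, r ^ (2 * s + (n : ℝ) - 3) * Real.sin (r * t)^2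
          * Real.exp (-(c * r^2 * t)))
        ≤ C * (1 + t) ^ (2 - 5 * s / 3 - 5 * (n : ℝ) / 6) := by
  obtain ⟨a, ha⟩ : ∃ a : ℝ, a = 2 * s + (n : ℝ) - 3 := ⟨_, rfl⟩
  have hexp : 2 - 5 * s / 3 - 5 * (n : ℝ) / 6 = -1 / 2 - 5 * a / 6 := by rw [ha]; ring
  rw [hexp, ← ha]
  have ha1 : -1 < a := by linarith
  have ha0 : a < 0 := by linarith
  have hΓ : 0 < Real.Gamma ((a + 1) / 2) := Real.Gamma_pos_of_pos (by linarith)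
  refine ⟨Real.exp c * (c ^ (-(a + 1) / 2) * (1 / 2) * Real.Gamma ((a + 1) / 2)),
    by positivity, fun t ht => ?_⟩
  have hb : 0 < c * (1 + t) := by positivity
  have hmoment := integral_rpow_mul_exp_neg_mul_rpow (p := 2) (q := a) (b := c * (1 + t))
    two_pos ha1 hb
  have hint : MeasureTheory.IntegrableOn
      (fun r : ℝ => r ^ a * Real.exp (-(c * (1 + t)) * r ^ (2 : ℝ))) (Set.Ioi 0) :=
    integrableOn_rpow_mul_exp_neg_mul_rpow ha1 two_pos hb
  have hnonneg : ∀ r ∈ Set.Ioi (0 : ℝ),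
      0 ≤ r ^ a * Real.exp (-(c * (1 + t)) * r ^ (2 : ℝ)) := fun r hr =>
    mul_nonneg (Real.rpow_nonneg (le_of_lt hr) _) (Real.exp_pos _).le
  have hsub : Set.Ioc 0 ε ⊆ Set.Ioi (0 : ℝ) := fun r hr => hr.1
  have hpt : ∀ r ∈ Set.Ioc 0 ε, r ^ a * Real.sin (r * t) ^ 2 * Real.exp (-(c * r ^ 2 * t)) ≤
      Real.exp c * (r ^ a * Real.exp (-(c * (1 + t)) * r ^ (2 : ℝ))) := by
    intro r hr
    have hr0 : 0 < r := hr.1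
    have hr2 : r ^ 2 ≤ 1 := pow_le_one₀ hr0.le (hr.2.trans hε1.le)
    have hra : 0 ≤ r ^ a := Real.rpow_nonneg hr0.le _
    rw [Real.rpow_two]
    calc r ^ a * Real.sin (r * t) ^ 2 * Real.exp (-(c * r ^ 2 * t))
        ≤ r ^ a * 1 * Real.exp (c + -(c * (1 + t)) * r ^ 2) := by
          gcongr
          · exact Real.sin_sq_le_one _
          · nlinarith
      _ = _ := by rw [Real.exp_add]; ring
  rw [intervalIntegral.integral_of_le hε0.le]
  calc ∫ r in Set.Ioc 0 ε, r ^ a * Real.sin (r * t) ^ 2 * Real.exp (-(c * r ^ 2 * t))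
      ≤ ∫ r in Set.Ioc 0 ε, Real.exp c * (r ^ a * Real.exp (-(c * (1 + t)) * r ^ (2 : ℝ))) := by
        refine MeasureTheory.integral_mono_of_nonneg ?_ ((hint.mono_set hsub).const_mul _) ?_
        · filter_upwards [MeasureTheory.ae_restrict_mem measurableSet_Ioc] with r hr
          have := Real.rpow_nonneg hr.1.le a
          simp only [Pi.zero_apply]
          positivity
        · filter_upwards [MeasureTheory.ae_restrict_mem measurableSet_Ioc] with r hr
          exact hpt r hr
    _ = Real.exp c * ∫ r in Set.Ioc 0 ε, r ^ a * Real.exp (-(c * (1 + t)) * r ^ (2 : ℝ)) :=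
        MeasureTheory.integral_const_mul _ _
    _ ≤ Real.exp c * ∫ r in Set.Ioi 0, r ^ a * Real.exp (-(c * (1 + t)) * r ^ (2 : ℝ)) := by
        refine mul_le_mul_of_nonneg_left ?_ (Real.exp_pos c).le
        refine MeasureTheory.setIntegral_mono_set hint ?_ hsub.eventuallyLE
        filter_upwards [MeasureTheory.ae_restrict_mem measurableSet_Ioi] with r hr
        exact hnonneg r hr
    _ = Real.exp c * (c ^ (-(a + 1) / 2) * (1 / 2) * Real.Gamma ((a + 1) / 2)) *
          (1 + t) ^ (-(a + 1) / 2) := by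
        rw [hmoment, Real.mul_rpow hc.le (by positivity)]; ring
    _ ≤ _ := by
        refine mul_le_mul_of_nonneg_left ?_ (by positivity)
        exact Real.rpow_le_rpow_of_exponent_le (by linarith) (by linarith)
end
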